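/- Let p be a prime and let φ ∈ ℤ[x] be a monic polynomial whose reduction φ̄ modulo p is irreducible in 𝔽_p[x]. Let g, h ∈ ℤ[x] be polynomials neither of which is divisible by φ(x) in ℤ[x] and whose leading coefficients are not divisible by p. Let t, u, w be the largest indices of nonzero terms in the φ-expansions of g, h and g·h respectively, and let α, β, γ denote the multiplicities of φ̄ as a factor in 𝔽_p[x] of the reductions modulo p of g, h and g·h respectively. Then w − γ equals either (t − α) + (u − β) or (t − α) + (u − β) + 1. (This expresses that the length of the slope-zero edge of the φ-Newton polygon of g·h with respect to p either equals the sum of the lengths of the slope-zero edges of the φ-Newton polygons of g and h, or exceeds that sum by one.) -/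

import Mathlib

open Polynomial

/-!
In the `φ`-adic expansion of `f` with top index `n`, the term `c n * φ ^ n` has strictly larger
degree than all the others together, so `n` is the quotient of `deg f` by `deg φ`. Degrees add
under multiplication, and the quotient of a sum is the sum of the quotients plus a carry of `0`
or `1`: this carry is the possible excess of the slope-zero edge. The multiplicities of the prime
`φ̄` simply add.
-/

section Degree

variable {R : Type*} [Semiring R] {φ : R[X]} {c : ℕ → R[X]} {n : ℕ}

lemma degree_mul_pow_lt_degree_pow_succ {a : R[X]} (hφ : φ.Monic) (ha : a.degree < φ.degree)
    (i : ℕ) : (a * φ ^ i).degree < (φ ^ (i + 1)).degree := by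
  have : Nontrivial R := nontrivial_iff.1 ⟨φ, 0, ne_zero_of_degree_gt ha⟩
  rw [pow_succ', (hφ.pow i).degree_mul, (hφ.pow i).degree_mul]
  exact WithBot.add_lt_add_right (degree_ne_bot.2 (hφ.pow i).ne_zero) ha

lemma degree_sum_mul_pow_lt [Nontrivial R] (hφ : φ.Monic)
    (hc : ∀ i < n, (c i).degree < φ.degree) :
    (∑ i ∈ Finset.range n, c i * φ ^ i).degree < (φ ^ n).degree := by
  refine (degree_sum_le _ _).trans_lt ((Finset.sup_lt_iff ?_).2 fun i hi ↦ ?_)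
  · exact bot_lt_iff_ne_bot.2 (degree_ne_bot.2 (hφ.pow n).ne_zero)
  · have hi : i < n := Finset.mem_range.1 hi
    have hpow : (φ ^ (i + 1)).degree ≤ (φ ^ n).degree := by
      rw [degree_eq_natDegree (hφ.pow _).ne_zero, degree_eq_natDegree (hφ.pow _).ne_zero,
        hφ.natDegree_pow, hφ.natDegree_pow]
      exact_mod_cast Nat.mul_le_mul_right _ hi
    exact (degree_mul_pow_lt_degree_pow_succ hφ (hc i hi) i).trans_le hpow

end Degree

/-- `c` lists the digits of the `φ`-adic expansion `f = ∑ i ≤ n, c i * φ ^ i`, each of degree less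
than `deg φ`, with top index `n`, i.e. `c n ≠ 0`. The values `c i` for `i > n` are irrelevant. -/
structure IsAdicExpansion {R : Type*} [Semiring R] (φ f : R[X]) (n : ℕ) (c : ℕ → R[X]) : Prop where
  eq_sum : f = ∑ i ∈ Finset.range (n + 1), c i * φ ^ i
  degree_lt : ∀ i ≤ n, (c i).degree < φ.degree
  top_ne_zero : c n ≠ 0

namespace IsAdicExpansion

variable {R : Type*} [Semiring R] {φ f g h : R[X]} {n t u w : ℕ} {c gc hc wc : ℕ → R[X]}

lemma degree_eq (hf : IsAdicExpansion φ f n c) (hφ : φ.Monic) :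
    f.degree = (c n * φ ^ n).degree := by
  have : Nontrivial R := nontrivial_iff.1 ⟨c n, 0, hf.top_ne_zero⟩
  have hlower : (∑ i ∈ Finset.range n, c i * φ ^ i).degree < (φ ^ n).degree :=
    degree_sum_mul_pow_lt hφ fun i hi ↦ hf.degree_lt i hi.le
  have htop : (φ ^ n).degree ≤ (c n * φ ^ n).degree := by
    rw [(hφ.pow n).degree_mul]
    exact le_add_of_nonneg_left (zero_le_degree_iff.2 hf.top_ne_zero)
  rw [hf.eq_sum, Finset.sum_range_succ]
  exact degree_add_eq_right_of_degree_lt (hlower.trans_le htop)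

lemma natDegree_eq (hf : IsAdicExpansion φ f n c) (hφ : φ.Monic) :
    f.natDegree = (c n).natDegree + n * φ.natDegree := by
  rw [natDegree_eq_of_degree_eq (hf.degree_eq hφ), ← (hφ.pow n).natDegree_mul_comm,
    (hφ.pow n).natDegree_mul' hf.top_ne_zero, hφ.natDegree_pow, add_comm]

lemma natDegree_top_lt (hf : IsAdicExpansion φ f n c) : (c n).natDegree < φ.natDegree :=
  natDegree_lt_natDegree hf.top_ne_zero (hf.degree_lt n le_rfl)

lemma ne_zero (hf : IsAdicExpansion φ f n c) (hφ : φ.Monic) : f ≠ 0 := by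
  rw [← degree_ne_bot, hf.degree_eq hφ, degree_ne_bot]
  exact (hφ.pow n).mul_left_ne_zero hf.top_ne_zero

lemma natDegree_div_eq (hf : IsAdicExpansion φ f n c) (hφ : φ.Monic) :
    f.natDegree / φ.natDegree = n := by
  rw [hf.natDegree_eq hφ, Nat.add_mul_div_right _ _ hf.natDegree_top_lt.pos,
    Nat.div_eq_of_lt hf.natDegree_top_lt, zero_add]

lemma top_index_mul_eq_or [NoZeroDivisors R] (hg : IsAdicExpansion φ g t gc) (hφ : φ.Monic)
    (hh : IsAdicExpansion φ h u hc) (hgh : IsAdicExpansion φ (g * h) w wc) :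
    w = t + u ∨ w = t + u + 1 := by
  have hw : w = (g.natDegree + h.natDegree) / φ.natDegree := by
    rw [← natDegree_mul (hg.ne_zero hφ) (hh.ne_zero hφ), hgh.natDegree_div_eq hφ]
  rw [Nat.add_div hg.natDegree_top_lt.pos, hg.natDegree_div_eq hφ, hh.natDegree_div_eq hφ] at hw
  split_ifs at hw
  · exact .inr hw
  · exact .inl hw

end IsAdicExpansion

theorem slope_zero_edge_length_general {R S : Type*} [Semiring R] [NoZeroDivisors R]
    [CommRing S] [IsDomain S] (σ : R →+* S) {φ g h : R[X]} (hφ : φ.Monic)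
    (hφσ : Prime (φ.map σ)) {t u w : ℕ} {gc hc wc : ℕ → R[X]}
    (hg : IsAdicExpansion φ g t gc) (hh : IsAdicExpansion φ h u hc)
    (hgh : IsAdicExpansion φ (g * h) w wc) {α β γ : ℕ}
    (hα : emultiplicity (φ.map σ) (g.map σ) = α) (hβ : emultiplicity (φ.map σ) (h.map σ) = β)
    (hγ : emultiplicity (φ.map σ) ((g * h).map σ) = γ) :
    (w : ℤ) - γ = (t - α) + (u - β) ∨ (w : ℤ) - γ = (t - α) + (u - β) + 1 := by
  have hmult : γ = α + β := by
    rw [Polynomial.map_mul, emultiplicity_mul hφσ, hα, hβ] at hγ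
    exact_mod_cast hγ.symm
  have hindex : w = t + u ∨ w = t + u + 1 := hg.top_index_mul_eq_or hφ hh hgh
  lia

/-- Lemma 3.A(ii). Let `p` be prime, `φ ∈ ℤ[x]` monic with irreducible reduction `φ̄`
mod `p`, and let `g, h ∈ ℤ[x]` be not divisible by `φ` and with leading coefficients
not divisible by `p`. If `t, u, w` are the top indices of the `φ`-expansions of
`g, h, g·h` and `α, β, γ` the multiplicities of `φ̄` in the reductions of `g, h, g·h`,
then `w - γ` equals `(t - α) + (u - β)` or `(t - α) + (u - β) + 1`. -/
theorem slope_zero_edge_length (p : ℕ) (hp : p.Prime) (φ g h : ℤ[X]) (hφmonic : φ.Monic)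
    (hφirr : Irreducible (φ.map (Int.castRingHom (ZMod p))))
    (hφg : ¬ φ ∣ g) (hφh : ¬ φ ∣ h)
    (hglc : ¬ (p : ℤ) ∣ g.leadingCoeff) (hhlc : ¬ (p : ℤ) ∣ h.leadingCoeff)
    (t u w : ℕ) (gc hc wc : ℕ → ℤ[X])
    (hgexp : g = ∑ i ∈ Finset.range (t + 1), gc i * φ ^ i)
    (hgdeg : ∀ i, (gc i).degree < φ.degree) (hgt : gc t ≠ 0)
    (hhexp : h = ∑ i ∈ Finset.range (u + 1), hc i * φ ^ i)
    (hhdeg : ∀ i, (hc i).degree < φ.degree) (hhu : hc u ≠ 0)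
    (hwexp : g * h = ∑ i ∈ Finset.range (w + 1), wc i * φ ^ i)
    (hwdeg : ∀ i, (wc i).degree < φ.degree) (hww : wc w ≠ 0)
    (α β γ : ℕ)
    (hα : (φ.map (Int.castRingHom (ZMod p))) ^ α ∣ g.map (Int.castRingHom (ZMod p)) ∧
      ¬ (φ.map (Int.castRingHom (ZMod p))) ^ (α + 1) ∣ g.map (Int.castRingHom (ZMod p)))
    (hβ : (φ.map (Int.castRingHom (ZMod p))) ^ β ∣ h.map (Int.castRingHom (ZMod p)) ∧
      ¬ (φ.map (Int.castRingHom (ZMod p))) ^ (β + 1) ∣ h.map (Int.castRingHom (ZMod p)))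
    (hγ : (φ.map (Int.castRingHom (ZMod p))) ^ γ ∣ (g * h).map (Int.castRingHom (ZMod p)) ∧
      ¬ (φ.map (Int.castRingHom (ZMod p))) ^ (γ + 1) ∣ (g * h).map (Int.castRingHom (ZMod p))) :
    (w : ℤ) - (γ : ℤ) = ((t : ℤ) - (α : ℤ)) + ((u : ℤ) - (β : ℤ)) ∨
    (w : ℤ) - (γ : ℤ) = ((t : ℤ) - (α : ℤ)) + ((u : ℤ) - (β : ℤ)) + 1 := by
  have : Fact p.Prime := ⟨hp⟩
  exact slope_zero_edge_length_general (Int.castRingHom (ZMod p)) hφmonic hφirr.prime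
    ⟨hgexp, fun i _ ↦ hgdeg i, hgt⟩ ⟨hhexp, fun i _ ↦ hhdeg i, hhu⟩
    ⟨hwexp, fun i _ ↦ hwdeg i, hww⟩
    (emultiplicity_eq_coe.2 hα) (emultiplicity_eq_coe.2 hβ) (emultiplicity_eq_coe.2 hγ)
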